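/- Let Φ be the root system of type B₃ realized with positive roots ε₁, ε₂, ε₃, ε_i + ε_j and ε_i − ε_j (i < j), and let P_k(ν) denote the number of ways to write ν as a sum of exactly k positive roots (with multiplicity, unordered). For every even integer m ≥ 0, the alternating sum over the Weyl group ∑_{u ∈ W} (−1)^{ℓ(u)} P_m(u·((m+1)ω₃) − ω₃) equals 1, where ω₃ = (ε₁+ε₂+ε₃)/2 and · is the dot action. -/

import Mathlib

noncomputable section

/-- the weight space of `B₃`, with coordinates in the `ε`-basis -/
abbrev V3 := Fin 3 → ℚ

/-- `ε_i` -/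
def e3 (i : Fin 3) : V3 := Pi.single i 1

/-- The nine positive roots of `B₃`: `ε₁, ε₂, ε₃` and `ε_i ± ε_j` for `i < j`. -/
def posB3 : Finset V3 :=
  {e3 0, e3 1, e3 2, e3 0 + e3 1, e3 0 + e3 2, e3 1 + e3 2,
   e3 0 - e3 1, e3 0 - e3 2, e3 1 - e3 2}

/-- Kostant's partition function: the number of ways (as unordered multisets) to write `ν`
as a sum of exactly `k` positive roots. -/
def PB3 (k : ℕ) (ν : V3) : ℕ :=
  Set.ncard {m : Multiset V3 | Multiset.card m = k ∧ (∀ x ∈ m, x ∈ posB3) ∧ m.sum = ν}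

/-- the standard inner product -/
def dot3 (x y : V3) : ℚ := ∑ i, x i * y i

/-- the reflection in the hyperplane orthogonal to `α` -/
def reflB3 (α : V3) : V3 → V3 := fun x => x - (2 * dot3 x α / dot3 α α) • α

/-- the simple roots `ε₁ - ε₂`, `ε₂ - ε₃`, `ε₃` of `B₃` -/
def simpleB3 : Fin 3 → V3 := fun i =>
  if i = 0 then e3 0 - e3 1 else if i = 1 then e3 1 - e3 2 else e3 2

/-- the composite of the simple reflections listed in `l` -/
def compB3 (l : List (Fin 3)) : V3 → V3 :=
  (l.map (fun i => reflB3 (simpleB3 i))).foldr (· ∘ ·) id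

/-- the length of a Weyl group element: the minimal length of a word in the simple
reflections representing it -/
def lenB3 (u : V3 → V3) : ℕ := sInf {m | ∃ l : List (Fin 3), l.length = m ∧ u = compB3 l}

/-- the half-sum `ρ` of the positive roots -/
def ρ3 : V3 := (2 : ℚ)⁻¹ • ∑ α ∈ posB3, α

/-- the fundamental weight `ω₃ = (ε₁ + ε₂ + ε₃)/2` -/
def ω3 : V3 := (2 : ℚ)⁻¹ • (e3 0 + e3 1 + e3 2)

/-!
By the dot action, `P_m` is evaluated at `w(n + 3, n + 2, n + 1) - (3, 2, 1)`, where `m = 2n` and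
`w` runs over the signed permutations. If `w` changes one of the first two signs, no partition
exists; pairing off the two signs of the third coordinate leaves a sum over the six permutations.

Multisets of roots containing `α` and summing to `μ` correspond to those containing `β` and summing
to `μ - α + β`, so the difference of the two partition numbers only sees multisets that avoid `α`
or `β`. For a long root `α` every other positive root has inner product at most `1` with `α`; hence
`k` roots avoiding `α` cannot sum to `ν` once `⟨α, ν⟩ > k`. These two facts cancel all six terms
except the partitions of `(n, n, n)` into `2n` roots avoiding `ε₁ + ε₂` and `ε₁ + ε₃`. On those
roots `2x₁ + x₂ + x₃` is at most `2`, with equality only at `ε₁` and `ε₂ + ε₃`, so the one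
such partition is `n • ε₁ + n • (ε₂ + ε₃)`.
-/

open Finset

section KostantPartition

variable {V M : Type*} [AddCommMonoid V]

/-- The number of multisets of `k` elements of `R` with sum `ν`. It is `PB3` for `R = posB3`; the
other sets `R` of interest arise by discarding roots from `posB3`. -/
def kostantPartition (R : Finset V) (k : ℕ) (ν : V) : ℕ :=
  Set.ncard {m : Multiset V | Multiset.card m = k ∧ (∀ x ∈ m, x ∈ R) ∧ m.sum = ν}

lemma finite_setOf_card_eq_sum_eq (R : Finset V) (k : ℕ) (ν : V) :
    {m : Multiset V | Multiset.card m = k ∧ (∀ x ∈ m, x ∈ R) ∧ m.sum = ν}.Finite := by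
  classical
  refine ((R.sym k).finite_toSet.image fun m : Sym V k => (m : Multiset V)).subset ?_
  rintro m ⟨hm, hR, -⟩
  exact ⟨⟨m, hm⟩, mem_coe.2 (mem_sym_iff.2 hR), rfl⟩

lemma kostantPartition_zero (R : Finset V) (ν : V) :
    kostantPartition R 0 ν = {m : Multiset V | m = 0 ∧ 0 = ν}.ncard := by
  refine congrArg Set.ncard (Set.ext fun m => ?_)
  simp +contextual [Multiset.card_eq_zero]

lemma kostantPartition_eq_zero_of_lt [AddCommMonoid M] [PartialOrder M] [IsOrderedAddMonoid M]
    {R : Finset V} {k : ℕ} {ν : V} (φ : V →+ M) {t : M} (hR : ∀ x ∈ R, φ x ≤ t)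
    (hν : k • t < φ ν) : kostantPartition R k ν = 0 := by
  rw [kostantPartition, Set.ncard_eq_zero (finite_setOf_card_eq_sum_eq R k ν),
    Set.eq_empty_iff_forall_notMem]
  rintro m ⟨rfl, hm, rfl⟩
  refine hν.not_ge ?_
  rw [map_multiset_sum, ← Multiset.card_map φ]
  exact Multiset.sum_le_card_nsmul _ _ (by simpa using fun x hx => hR x (hm x hx))

lemma kostantPartition_eq_of_face [AddCommMonoid M] [PartialOrder M] [IsOrderedCancelAddMonoid M]
    {R S : Finset V} {k : ℕ} {ν : V} (φ : V →+ M) {t : M} (hSR : S ⊆ R) (hS : ∀ x ∈ S, φ x = t)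
    (hR : ∀ x ∈ R, x ∉ S → φ x < t) (hν : φ ν = k • t) :
    kostantPartition R k ν = kostantPartition S k ν := by
  refine congrArg Set.ncard (Set.ext fun m => and_congr_right fun hk => and_congr_left fun hm =>
    ⟨fun h x hx => ?_, fun h x hx => hSR (h x hx)⟩)
  by_contra hxS
  have hlt : (m.map φ).sum < (m.map fun _ => t).sum := by
    refine Multiset.sum_lt_sum (fun y hy => ?_) ⟨x, hx, hR x (h x hx) hxS⟩
    by_cases hyS : y ∈ S
    exacts [(hS y hyS).le, (hR y (h y hy) hyS).le]
  rw [← map_multiset_sum, hm, hν, Multiset.map_const', Multiset.sum_replicate, hk] at hlt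
  exact hlt.false

end KostantPartition

section KostantPartitionGroup

variable {V : Type*} [AddCommGroup V]

lemma kostantPartition_succ [DecidableEq V] {R : Finset V} {α : V} (hα : α ∈ R) (k : ℕ) (ν : V) :
    kostantPartition R (k + 1) ν =
      kostantPartition R k (ν - α) + kostantPartition (R.erase α) (k + 1) ν := by
  have hinj : Function.Injective (α ::ₘ · : Multiset V → Multiset V) :=
    fun _ _ => (Multiset.cons_inj_right α).1
  unfold kostantPartition
  rw [← Set.ncard_image_of_injective {m | _ ∧ _ ∧ m.sum = ν - α} hinj, ← Set.ncard_union_eq ?_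
    ((finite_setOf_card_eq_sum_eq R k _).image _) (finite_setOf_card_eq_sum_eq _ _ _)]
  · congr 1
    ext m
    constructor
    · rintro ⟨hk, hR, hν⟩
      by_cases h : α ∈ m
      · obtain ⟨m, rfl⟩ := Multiset.exists_cons_of_mem h
        refine Or.inl ⟨m, ⟨by simpa using hk, fun x hx => hR x (Multiset.mem_cons_of_mem hx), ?_⟩,
          rfl⟩
        rw [← hν, Multiset.sum_cons, add_sub_cancel_left]
      · exact Or.inr ⟨hk, fun x hx => mem_erase.2 ⟨fun hxα => h (hxα ▸ hx), hR x hx⟩, hν⟩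
    · rintro (⟨m, ⟨hk, hR, hν⟩, rfl⟩ | ⟨hk, hR, hν⟩)
      · exact ⟨by simp [hk], by simpa [hα] using hR, by simp [hν]⟩
      · exact ⟨hk, fun x hx => mem_of_mem_erase (hR x hx), hν⟩
  · rw [Set.disjoint_left]
    rintro _ ⟨m, -, rfl⟩ ⟨-, hR, -⟩
    exact notMem_erase α R (hR α (Multiset.mem_cons_self α m))

/-- Replacing one copy of `α` by one copy of `β` matches the multisets on the two sides that
contain `α` and `β` respectively. -/
lemma kostantPartition_sub_kostantPartition [DecidableEq V] {R : Finset V} {α β : V} (hα : α ∈ R)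
    (hβ : β ∈ R) (k : ℕ) {μ ν : V} (h : μ - α = ν - β) :
    (kostantPartition R k μ - kostantPartition R k ν : ℤ) =
      kostantPartition (R.erase α) k μ - kostantPartition (R.erase β) k ν := by
  cases k with
  | zero => simp only [kostantPartition_zero]
  | succ k =>
    rw [kostantPartition_succ hα, kostantPartition_succ hβ, h]
    push_cast
    ring

lemma eq_of_add_eq_add_of_nsmul_add_nsmul_eq [IsAddTorsionFree V] {x y : V} (hxy : x ≠ y)
    {i j p q : ℕ} (h : p + q = i + j) (h' : p • x + q • y = i • x + j • y) : p = i := by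
  have hq : (q : ℤ) = j - (p - i) := by omega
  have hs : ((p : ℤ) - i) • (x - y) = 0 := by
    rw [← natCast_zsmul x, ← natCast_zsmul y, ← natCast_zsmul x, ← natCast_zsmul y, hq] at h'
    rw [← sub_eq_zero.2 h']
    module
  rcases smul_eq_zero.1 hs with h0 | h0
  · omega
  · exact absurd (sub_eq_zero.1 h0) hxy

lemma kostantPartition_pair [DecidableEq V] [IsAddTorsionFree V] {x y : V} (hxy : x ≠ y)
    (i j : ℕ) : kostantPartition {x, y} (i + j) (i • x + j • y) = 1 := by
  rw [kostantPartition, Set.ncard_eq_one]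
  refine ⟨Multiset.replicate i x + Multiset.replicate j y, Set.ext fun m => ⟨?_, ?_⟩⟩
  · rintro ⟨hk, hm, hs⟩
    have hrep : m = Multiset.replicate (m.count x) x + Multiset.replicate (m.count y) y := by
      ext z
      by_cases hz : z ∈ m
      · rcases mem_insert.1 (hm z hz) with rfl | hzy
        · simp [Multiset.count_replicate, hxy.symm]
        · simp [Multiset.count_replicate, mem_singleton.1 hzy, hxy]
      · rw [Multiset.count_eq_zero_of_notMem hz, eq_comm, Multiset.count_eq_zero]
        intro hz'
        rcases Multiset.mem_add.1 hz' with h | h <;>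
          obtain ⟨hne, rfl⟩ := Multiset.mem_replicate.1 h <;>
          exact hz (Multiset.count_ne_zero.1 hne)
    generalize m.count x = p at hrep
    generalize m.count y = q at hrep
    subst hrep
    simp only [Multiset.card_add, Multiset.card_replicate, Multiset.sum_add,
      Multiset.sum_replicate] at hk hs
    obtain rfl := eq_of_add_eq_add_of_nsmul_add_nsmul_eq hxy hk hs
    obtain rfl := Nat.add_left_cancel hk
    rfl
  · rintro rfl
    refine ⟨by simp, fun z hz => ?_, by simp⟩
    rcases Multiset.mem_add.1 hz with hz | hz <;> simp [Multiset.eq_of_mem_replicate hz]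

end KostantPartitionGroup

/-- The signed permutation of the coordinates that moves coordinate `i` to position `σ i` and then
multiplies the coordinates by the signs `s`. -/
def signedPerm (σ : Equiv.Perm (Fin 3)) (s : Fin 3 → ℤˣ) : V3 → V3 :=
  fun x i => ((s i : ℤ) : ℚ) * x (σ⁻¹ i)

/-- The determinant of `signedPerm σ s`. -/
def signedPermSign (σ : Equiv.Perm (Fin 3)) (s : Fin 3 → ℤˣ) : ℤˣ := σ.sign * ∏ i, s i

lemma signedPerm_comp (σ τ : Equiv.Perm (Fin 3)) (s t : Fin 3 → ℤˣ) :
    signedPerm σ s ∘ signedPerm τ t = signedPerm (σ * τ) fun i => s i * t (σ⁻¹ i) := by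
  ext x i
  simp [signedPerm, mul_assoc]

lemma signedPermSign_mul (σ τ : Equiv.Perm (Fin 3)) (s t : Fin 3 → ℤˣ) :
    signedPermSign (σ * τ) (fun i => s i * t (σ⁻¹ i)) =
      signedPermSign σ s * signedPermSign τ t := by
  rw [signedPermSign, signedPermSign, signedPermSign, Equiv.Perm.sign_mul, prod_mul_distrib,
    Equiv.prod_comp σ⁻¹ t, mul_mul_mul_comm]

lemma signedPerm_one : signedPerm 1 1 = id := by
  ext x i
  simp [signedPerm]

lemma signedPerm_injective :
    Function.Injective fun p : Equiv.Perm (Fin 3) × (Fin 3 → ℤˣ) => signedPerm p.1 p.2 := by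
  rintro ⟨σ, s⟩ ⟨τ, t⟩ h
  -- At `x = (1, 2, 3)` the sign of a coordinate recovers `s`, its absolute value recovers `σ`.
  have hval (i : Fin 3) :
      (s i : ℤ) * ((σ⁻¹ i : Fin 3) + 1 : ℕ) = t i * ((τ⁻¹ i : Fin 3) + 1 : ℕ) := by
    have := congrFun (congrFun h fun j => ((j : ℕ) + 1 : ℕ)) i
    simp only [signedPerm] at this
    exact_mod_cast this
  have hst : s = t := funext fun i => by
    have := hval i
    rcases Int.units_eq_one_or (s i) with hs | hs <;>
      rcases Int.units_eq_one_or (t i) with ht | ht <;>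
      simp only [hs, ht, Units.val_one, Units.val_neg] at this ⊢ <;> omega
  have hστ : σ⁻¹ = τ⁻¹ := Equiv.ext fun i => by
    have := hval i
    simpa [hst, Fin.ext_iff] using this
  rw [inv_injective hστ, hst]

lemma reflB3_simpleB3 (i : Fin 3) : reflB3 (simpleB3 i) =
    ![signedPerm (Equiv.swap 0 1) 1, signedPerm (Equiv.swap 1 2) 1,
      signedPerm 1 (Pi.mulSingle 2 (-1))] i := by
  ext x j
  fin_cases i <;> fin_cases j <;>
    simp [reflB3, simpleB3, dot3, e3, signedPerm, Fin.sum_univ_three, Equiv.swap_apply_of_ne_of_ne]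
    <;> ring

lemma exists_compB3_eq_signedPerm (l : List (Fin 3)) :
    ∃ σ s, compB3 l = signedPerm σ s ∧ (-1) ^ l.length = signedPermSign σ s := by
  induction l with
  | nil => exact ⟨1, 1, signedPerm_one.symm, by simp [signedPermSign]⟩
  | cons i l ih =>
    obtain ⟨τ, t, hl, hl'⟩ := ih
    obtain ⟨σ, s, hi, hi'⟩ :
        ∃ σ s, reflB3 (simpleB3 i) = signedPerm σ s ∧ -1 = signedPermSign σ s := by
      rw [reflB3_simpleB3]
      fin_cases i <;> exact ⟨_, _, rfl, by decide⟩
    refine ⟨σ * τ, fun i => s i * t (σ⁻¹ i), ?_, ?_⟩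
    · rw [← signedPerm_comp, ← hl, ← hi]
      rfl
    · rw [signedPermSign_mul, ← hl', ← hi', List.length_cons, pow_succ']

lemma compB3_append (l l' : List (Fin 3)) : compB3 (l ++ l') = compB3 l ∘ compB3 l' := by
  induction l with
  | nil => rfl
  | cons i l ih => exact congrArg (reflB3 (simpleB3 i) ∘ ·) ih

/-- The Weyl group of `B₃`, as the monoid of all composites of simple reflections. -/
def weylB3 : Submonoid (Function.End V3) where
  carrier := {u | ∃ l, u = compB3 l}
  one_mem' := ⟨[], rfl⟩
  mul_mem' := by
    rintro _ _ ⟨l, rfl⟩ ⟨l', rfl⟩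
    exact ⟨l ++ l', (compB3_append l l').symm⟩

/-- Permutation matrices, as a homomorphism. -/
def permHom : Equiv.Perm (Fin 3) →* Function.End V3 where
  toFun σ := signedPerm σ 1
  map_one' := signedPerm_one
  map_mul' σ τ := by
    change _ = signedPerm σ 1 ∘ signedPerm τ 1
    simp only [signedPerm_comp, Pi.one_apply, one_mul]
    rfl

/-- Diagonal sign matrices, as a homomorphism. -/
def signFlipHom : (Fin 3 → ℤˣ) →* Function.End V3 where
  toFun s := signedPerm 1 s
  map_one' := signedPerm_one
  map_mul' s t := by
    change _ = signedPerm 1 s ∘ signedPerm 1 t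
    simp only [signedPerm_comp, inv_one, Equiv.Perm.one_apply, one_mul]
    rfl

lemma permHom_mem_weylB3 (σ : Equiv.Perm (Fin 3)) : permHom σ ∈ weylB3 := by
  have h : (⊤ : Submonoid (Equiv.Perm (Fin 3))) ≤ weylB3.comap permHom := by
    rw [← Equiv.Perm.mclosure_swap_castSucc_succ 2, Submonoid.closure_le]
    rintro _ ⟨i, rfl⟩
    fin_cases i
    · exact ⟨[0], (reflB3_simpleB3 0).symm⟩
    · exact ⟨[1], (reflB3_simpleB3 1).symm⟩
  exact h (Submonoid.mem_top σ)

lemma signFlipHom_mulSingle_mem_weylB3 (i : Fin 3) :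
    signFlipHom (Pi.mulSingle i (-1)) ∈ weylB3 := by
  have hconj : permHom (Equiv.swap i 2) * signFlipHom (Pi.mulSingle 2 (-1)) *
      permHom (Equiv.swap i 2) = signFlipHom (Pi.mulSingle i (-1)) := by
    change (signedPerm _ _ ∘ signedPerm _ _) ∘ signedPerm _ _ = signedPerm _ _
    rw [signedPerm_comp, signedPerm_comp]
    congr 1
    · simp
    · revert i
      decide
  rw [← hconj]
  have h2 : signFlipHom (Pi.mulSingle 2 (-1)) ∈ weylB3 :=
    ⟨[2], (reflB3_simpleB3 2).symm⟩
  exact mul_mem (mul_mem (permHom_mem_weylB3 _) h2) (permHom_mem_weylB3 _)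

lemma signFlipHom_mem_weylB3 (s : Fin 3 → ℤˣ) : signFlipHom s ∈ weylB3 := by
  rw [← Finset.univ_prod_mulSingle s, ← Submonoid.mem_comap]
  refine prod_mem fun i _ => ?_
  rcases Int.units_eq_one_or (s i) with h | h
  · simp only [h, Pi.mulSingle_one, one_mem]
  · rw [h]
    exact signFlipHom_mulSingle_mem_weylB3 i

lemma signedPerm_mem_weylB3 (σ : Equiv.Perm (Fin 3)) (s : Fin 3 → ℤˣ) :
    signedPerm σ s ∈ weylB3 := by
  have h : signFlipHom s * permHom σ = signedPerm σ s := by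
    change signedPerm 1 s ∘ signedPerm σ 1 = _
    simp only [signedPerm_comp, Pi.one_apply, mul_one, one_mul]
  exact h ▸ mul_mem (signFlipHom_mem_weylB3 s) (permHom_mem_weylB3 σ)

lemma neg_one_pow_lenB3_signedPerm (σ : Equiv.Perm (Fin 3)) (s : Fin 3 → ℤˣ) :
    (-1 : ℤ) ^ lenB3 (signedPerm σ s) = signedPermSign σ s := by
  obtain ⟨l₀, h₀⟩ := signedPerm_mem_weylB3 σ s
  obtain ⟨l, hlen, hl⟩ := Nat.sInf_mem
    (s := {m | ∃ l : List (Fin 3), l.length = m ∧ signedPerm σ s = compB3 l}) ⟨_, l₀, rfl, h₀⟩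
  obtain ⟨τ, t, h, hsign⟩ := exists_compB3_eq_signedPerm l
  obtain ⟨rfl, rfl⟩ := Prod.mk.inj (signedPerm_injective (a₁ := (σ, s)) (a₂ := (τ, t)) (hl.trans h))
  rw [← hsign, lenB3, ← hlen]
  simp

lemma sum_weylB3_eq_sum_signedPerm {W : Finset (V3 → V3)}
    (hW : ∀ u, u ∈ W ↔ ∃ l : List (Fin 3), u = compB3 l) (f : (V3 → V3) → ℤ) :
    ∑ u ∈ W, (-1 : ℤ) ^ lenB3 u * f u =
      ∑ σ, ∑ s, (signedPermSign σ s : ℤ) * f (signedPerm σ s) := by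
  classical
  have hW' : W = univ.image fun p : Equiv.Perm (Fin 3) × (Fin 3 → ℤˣ) => signedPerm p.1 p.2 := by
    ext u
    simp only [hW, mem_image, mem_univ, true_and, Prod.exists]
    constructor
    · rintro ⟨l, rfl⟩
      obtain ⟨σ, s, h, -⟩ := exists_compB3_eq_signedPerm l
      exact ⟨σ, s, h.symm⟩
    · rintro ⟨σ, s, rfl⟩
      exact signedPerm_mem_weylB3 σ s
  rw [hW', sum_image signedPerm_injective.injOn, Fintype.sum_prod_type]
  simp only [neg_one_pow_lenB3_signedPerm]

lemma e3_dot3 (i : Fin 3) (x : V3) : dot3 (e3 i) x = x i :=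
  single_one_dotProduct i x

lemma add_dot3 (α β x : V3) : dot3 (α + β) x = dot3 α x + dot3 β x := add_dotProduct α β x

lemma sub_dot3 (α β x : V3) : dot3 (α - β) x = dot3 α x - dot3 β x := sub_dotProduct α β x

/-- Pairing with `α`, the height function used to bound partitions. -/
def dot3Hom (α : V3) : V3 →+ ℚ :=
  AddMonoidHom.mk' (dot3 α) (dotProduct_add α)

/-- The long positive roots `ε_i ± ε_j`. -/
def longB3 : Finset V3 := posB3.filter fun α => dot3 α α = 2

lemma dot3_le_one_of_mem_longB3 :
    ∀ α ∈ longB3, ∀ x ∈ posB3.erase α, dot3 α x ≤ 1 := by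
  decide +kernel

lemma kostantPartition_erase_eq_zero {R : Finset V3} (hR : R ⊆ posB3) {α : V3}
    (hα : α ∈ longB3) {k : ℕ} {ν : V3} (hν : (k : ℚ) < dot3 α ν) :
    kostantPartition (R.erase α) k ν = 0 :=
  kostantPartition_eq_zero_of_lt (dot3Hom α)
    (fun x hx => dot3_le_one_of_mem_longB3 α hα x (erase_subset_erase α hR hx))
    (by rwa [nsmul_one])

lemma PB3_eq_kostantPartition : PB3 = kostantPartition posB3 := rfl

lemma PB3_eq_zero_of_dot3_neg {ω : V3} (hω : ∀ x ∈ posB3, 0 ≤ dot3 ω x) {k : ℕ} {ν : V3}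
    (hν : dot3 ω ν < 0) : PB3 k ν = 0 := by
  rw [PB3_eq_kostantPartition]
  exact kostantPartition_eq_zero_of_lt (-dot3Hom ω) (t := 0) (fun x hx => neg_nonpos.2 (hω x hx))
    (by rw [smul_zero]; exact neg_pos.2 hν)

lemma PB3_sub_PB3 {α β : V3} (hα : α ∈ posB3) (hβ : β ∈ longB3) {k : ℕ}
    {μ ν : V3} (h : μ - α = ν - β) (hν : (k : ℚ) < dot3 β ν) :
    (PB3 k μ - PB3 k ν : ℤ) = kostantPartition (posB3.erase α) k μ := by
  rw [PB3_eq_kostantPartition,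
    kostantPartition_sub_kostantPartition hα (filter_subset _ _ hβ) k h,
    kostantPartition_erase_eq_zero Subset.rfl hβ hν, Nat.cast_zero, sub_zero]

/-- Restricted to sign changes of the third coordinate only, the alternating sum of `P_k` under
the dot action; `-c - 2` occurs because of the shift by `ρ + ω₃ = (3, 2, 1)`. -/
def foldedPB3 (k : ℕ) (a b c : ℚ) : ℤ := PB3 k ![a, b, c] - PB3 k ![a, b, -c - 2]

lemma foldedPB3_sub_foldedPB3 {k : ℕ} {a b c : ℚ} (ha : k < a + c + 2) (hb : k < b + c + 1) :
    foldedPB3 k a b c - foldedPB3 k (a - 1) (b + 1) c =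
      kostantPartition (posB3.erase (e3 0 + e3 2)) k ![a, b, c] := by
  have hpos : (PB3 k ![a, b, c] - PB3 k ![a - 1, b + 1, c] : ℤ) =
      kostantPartition (posB3.erase (e3 0 + e3 2)) k ![a, b, c] := by
    refine PB3_sub_PB3 (β := e3 1 + e3 2) (by decide +kernel) (by decide +kernel) ?_ ?_
    · ext i
      fin_cases i <;> simp [e3]
    · simp only [add_dot3, e3_dot3, Matrix.cons_val]
      linarith
  have hneg : (PB3 k ![a, b, -c - 2] - PB3 k ![a - 1, b + 1, -c - 2] : ℤ) = 0 := by
    rw [PB3_sub_PB3 (α := e3 0 - e3 2) (β := e3 1 - e3 2) (by decide +kernel) (by decide +kernel),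
      kostantPartition_erase_eq_zero Subset.rfl (by decide +kernel), Nat.cast_zero]
    · simp only [sub_dot3, e3_dot3, Matrix.cons_val]
      linarith
    · ext i
      fin_cases i <;> simp [e3]
    · simp only [sub_dot3, e3_dot3, Matrix.cons_val]
      linarith
  rw [foldedPB3, foldedPB3]
  linarith

lemma foldedPB3_eq_foldedPB3 {k : ℕ} {a b c : ℚ} (ha : k < a + c) (hb : k < b + c + 1) :
    foldedPB3 k a b c = foldedPB3 k (a - 1) (b + 1) c := by
  rw [← sub_eq_zero, foldedPB3_sub_foldedPB3 (by linarith) hb,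
    kostantPartition_erase_eq_zero Subset.rfl (by decide +kernel), Nat.cast_zero]
  simpa only [add_dot3, e3_dot3, Matrix.cons_val] using ha

lemma kostantPartition_erase_erase_diagonal (n : ℕ) :
    kostantPartition ((posB3.erase (e3 0 + e3 2)).erase (e3 0 + e3 1)) (2 * n) ![(n : ℚ), n, n] =
      1 := by
  have hface : kostantPartition ((posB3.erase (e3 0 + e3 2)).erase (e3 0 + e3 1)) (2 * n)
      ![(n : ℚ), n, n] = kostantPartition {e3 0, e3 1 + e3 2} (2 * n) ![(n : ℚ), n, n] := by
    refine kostantPartition_eq_of_face (dot3Hom ![2, 1, 1]) (t := 2) (by decide +kernel)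
      (show ∀ x ∈ _, dot3 _ x = 2 by decide +kernel)
      (show ∀ x ∈ _, x ∉ _ → dot3 _ x < 2 by decide +kernel) ?_
    change dot3 _ _ = _
    simp only [dot3, Fin.sum_univ_three, Matrix.cons_val, nsmul_eq_mul, Nat.cast_mul,
      Nat.cast_ofNat]
    ring
  have hν : ![(n : ℚ), n, n] = n • e3 0 + n • (e3 1 + e3 2) := by
    ext i
    fin_cases i <;> simp [e3]
  rw [hface, hν, two_mul, kostantPartition_pair (by decide +kernel)]

lemma kostantPartition_erase_diagonal_sub (n : ℕ) :
    (kostantPartition (posB3.erase (e3 0 + e3 2)) (2 * n) ![(n : ℚ), n, n] -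
      kostantPartition (posB3.erase (e3 0 + e3 2)) (2 * n) ![(n : ℚ) - 1, n, n + 1] : ℤ) = 1 := by
  rw [kostantPartition_sub_kostantPartition (α := e3 0 + e3 1) (β := e3 1 + e3 2)
    (by decide +kernel) (by decide +kernel), kostantPartition_erase_erase_diagonal,
    kostantPartition_erase_eq_zero (erase_subset _ _) (by decide +kernel)]
  · rw [Nat.cast_one, Nat.cast_zero, sub_zero]
  · simp only [add_dot3, e3_dot3, Matrix.cons_val, Nat.cast_mul, Nat.cast_ofNat]
    linarith
  · ext i
    fin_cases i <;> simp [e3]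

lemma alternating_sum_foldedPB3 (n : ℕ) :
    foldedPB3 (2 * n) n n n - foldedPB3 (2 * n) (n - 1) (n + 1) n -
      foldedPB3 (2 * n) n (n - 1) (n + 1) - foldedPB3 (2 * n) (n - 2) n (n + 2) +
      foldedPB3 (2 * n) (n - 1) (n - 1) (n + 2) + foldedPB3 (2 * n) (n - 2) (n + 1) (n + 1) =
      1 := by
  have h₁ : foldedPB3 (2 * n) n n n - foldedPB3 (2 * n) (n - 1) (n + 1) n =
      kostantPartition (posB3.erase (e3 0 + e3 2)) (2 * n) ![(n : ℚ), n, n] :=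
    foldedPB3_sub_foldedPB3 (by push_cast; linarith) (by push_cast; linarith)
  have h₂ : foldedPB3 (2 * n) (n - 1) n (n + 1) - foldedPB3 (2 * n) (n - 2) (n + 1) (n + 1) =
      kostantPartition (posB3.erase (e3 0 + e3 2)) (2 * n) ![(n : ℚ) - 1, n, n + 1] := by
    rw [← foldedPB3_sub_foldedPB3 (by push_cast; linarith) (by push_cast; linarith), sub_sub,
      one_add_one_eq_two]
  have h₃ : foldedPB3 (2 * n) n (n - 1) (n + 1) = foldedPB3 (2 * n) (n - 1) n (n + 1) := by
    rw [foldedPB3_eq_foldedPB3 (by push_cast; linarith) (by push_cast; linarith), sub_add_cancel]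
  have h₄ : foldedPB3 (2 * n) (n - 1) (n - 1) (n + 2) = foldedPB3 (2 * n) (n - 2) n (n + 2) := by
    rw [foldedPB3_eq_foldedPB3 (by push_cast; linarith) (by push_cast; linarith), sub_add_cancel,
      sub_sub, one_add_one_eq_two]
  linarith [kostantPartition_erase_diagonal_sub n]

lemma sum_prod_signs_mul_PB3 (k : ℕ) {v : V3} (h₀ : -3 < v 0) (h₁ : v 0 - v 1 < 5) :
    ∑ s : Fin 3 → ℤˣ, ((∏ i, s i : ℤˣ) : ℤ) *
      PB3 k ((fun i => ((s i : ℤ) : ℚ) * v i) - ![3, 2, 1]) =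
      foldedPB3 k (v 0 - 3) (v 1 - 2) (v 2 - 1) := by
  rw [Fintype.sum_eq_add 1 (Pi.mulSingle 2 (-1)) (by decide)]
  · have hpos : (fun i => (((1 : Fin 3 → ℤˣ) i : ℤ) : ℚ) * v i) - ![3, 2, 1] =
        ![v 0 - 3, v 1 - 2, v 2 - 1] := by
      ext i
      fin_cases i <;> simp
    have hneg : (fun i => (((Pi.mulSingle 2 (-1) : Fin 3 → ℤˣ) i : ℤ) : ℚ) * v i) - ![3, 2, 1] =
        ![v 0 - 3, v 1 - 2, -(v 2 - 1) - 2] := by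
      ext i
      fin_cases i <;> simp
      ring
    rw [hpos, hneg, foldedPB3]
    simp only [Pi.one_apply, prod_const_one, Units.val_one, one_mul, prod_pi_mulSingle', mem_univ,
      if_true, Units.val_neg]
    ring
  · rintro s ⟨hs, hs'⟩
    have hcases : s 0 = -1 ∨ s 0 = 1 ∧ s 1 = -1 := by
      revert s
      decide
    refine mul_eq_zero_of_right _ ?_
    rcases hcases with hs0 | ⟨hs0, hs1⟩
    · rw [PB3_eq_zero_of_dot3_neg (ω := e3 0) (by decide +kernel), Nat.cast_zero]
      simp only [e3_dot3, Pi.sub_apply, hs0, Units.val_neg, Units.val_one, Int.cast_neg,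
        Int.cast_one, Matrix.cons_val]
      linarith
    · rw [PB3_eq_zero_of_dot3_neg (ω := e3 0 + e3 1) (by decide +kernel), Nat.cast_zero]
      simp only [add_dot3, e3_dot3, Pi.sub_apply, hs0, hs1, Units.val_neg, Units.val_one,
        Int.cast_neg, Int.cast_one, Matrix.cons_val]
      linarith

lemma sum_sign_mul_perm_fin_three (f : Fin 3 → Fin 3 → Fin 3 → ℤ) :
    ∑ σ : Equiv.Perm (Fin 3), (σ.sign : ℤ) * f (σ⁻¹ 0) (σ⁻¹ 1) (σ⁻¹ 2) =
      f 0 1 2 - f 1 0 2 - f 0 2 1 - f 2 1 0 + f 1 2 0 + f 2 0 1 := by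
  rw [show (univ : Finset (Equiv.Perm (Fin 3))) = {1, .swap 0 1, .swap 1 2, .swap 0 2,
    .swap 0 1 * .swap 1 2, .swap 1 2 * .swap 0 1} by decide]
  repeat rw [sum_insert (by decide)]
  simp only [mul_inv_rev, Equiv.swap_inv, sum_singleton]
  simp only [Equiv.Perm.sign_one, Equiv.Perm.sign_mul, Equiv.Perm.sign_swap', Equiv.Perm.mul_apply,
    Equiv.Perm.one_apply, Equiv.swap_apply_def, inv_one, Units.val_one, Units.val_neg, Fin.reduceEq,
    if_true, if_false, mul_neg, mul_one, neg_neg]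
  ring

lemma sum_sign_mul_foldedPB3 (n : ℕ) :
    let v : V3 := ![(n : ℚ) + 3, n + 2, n + 1]
    ∑ σ : Equiv.Perm (Fin 3), (σ.sign : ℤ) *
      foldedPB3 (2 * n) (v (σ⁻¹ 0) - 3) (v (σ⁻¹ 1) - 2) (v (σ⁻¹ 2) - 1) = 1 := by
  intro v
  rw [sum_sign_mul_perm_fin_three fun i j l => foldedPB3 (2 * n) (v i - 3) (v j - 2) (v l - 1),
    ← alternating_sum_foldedPB3 n]
  simp only [v, Matrix.cons_val]
  ring_nf

lemma ρ3_eq : ρ3 = ![5 / 2, 3 / 2, 1 / 2] := by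
  decide +kernel

lemma ω3_eq : ω3 = ![1 / 2, 1 / 2, 1 / 2] := by
  decide +kernel

lemma ρ3_add_ω3 : ρ3 + ω3 = ![3, 2, 1] := by
  rw [ρ3_eq, ω3_eq]
  decide +kernel

lemma smul_ω3_add_ρ3 (n : ℕ) :
    (((2 * n : ℕ) : ℚ) + 1) • ω3 + ρ3 = ![(n : ℚ) + 3, n + 2, n + 1] := by
  rw [ρ3_eq, ω3_eq]
  ext i
  fin_cases i <;> simp <;> ring

-- For `B₃` and even `m ≥ 0`, `∑_{u ∈ W} (-1)^{ℓ(u)} P_m(u·((m+1)ω₃) - ω₃) = 1`,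
-- where `u·λ = u(λ + ρ) - ρ` is the dot action.
theorem statement12 (W : Finset (V3 → V3))
    (hW : ∀ u, u ∈ W ↔ ∃ l : List (Fin 3), u = compB3 l)
    (m : ℕ) (hm : Even m) :
    ∑ u ∈ W, (-1 : ℤ) ^ lenB3 u *
      (PB3 m (u (((m : ℚ) + 1) • ω3 + ρ3) - ρ3 - ω3) : ℤ) = 1 := by
  obtain ⟨n, rfl⟩ := hm.two_dvd
  rw [smul_ω3_add_ρ3]
  simp only [sub_sub, ρ3_add_ω3]
  set v : V3 := ![(n : ℚ) + 3, n + 2, n + 1]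
  have hv (i : Fin 3) : (n : ℚ) + 1 ≤ v i ∧ v i ≤ n + 3 := by
    fin_cases i <;> norm_num [v]
  have hsigns (σ : Equiv.Perm (Fin 3)) :
      ∑ s, ((∏ i, s i : ℤˣ) : ℤ) * PB3 (2 * n) (signedPerm σ s v - ![3, 2, 1]) =
        foldedPB3 (2 * n) (v (σ⁻¹ 0) - 3) (v (σ⁻¹ 1) - 2) (v (σ⁻¹ 2) - 1) :=
    sum_prod_signs_mul_PB3 (2 * n) (v := fun i => v (σ⁻¹ i)) (by linarith [(hv (σ⁻¹ 0)).1])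
      (by linarith [(hv (σ⁻¹ 0)).2, (hv (σ⁻¹ 1)).1])
  rw [sum_weylB3_eq_sum_signedPerm hW fun u => (PB3 (2 * n) (u v - ![3, 2, 1]) : ℤ)]
  simp only [signedPermSign, Units.val_mul, mul_assoc, ← mul_sum, hsigns]
  exact sum_sign_mul_foldedPB3 n

end
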